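/- Let k be a field of characteristic zero. The polynomial ag − 6bf + 15ce − 10d² ∈ k[a,b,c,d,e,f,g] (the sixth transvectant of a binary sextic over itself, equal to −A/240 in Igusa's normalization) is SL₂-invariant: for every M ∈ SL₂(k), M·(ag − 6bf + 15ce − 10d²) = ag − 6bf + 15ce − 10d². -/

import Mathlib

/-! Let `M` have rows `(p, q)`, `(r, s)`. Over any commutative ring the binomially normalised
coefficients `w j` of the substituted sextic are explicit linear forms `subCoeff p q r s v j` in
the coefficients `v`: symbolically, `w j = (p + q E) ^ (6 - j) * (r + s E) ^ j` with `E ^ n`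
replaced by `v n`. Plugging these into the transvectant gives the polynomial identity
`I(w) = (p s - q r) ^ 6 * I(v)` (`transvectant_subCoeff`), and `det M = 1` finishes the proof.

That `w` is really given by these linear forms (`coeff_of_sextic_eq`) follows by setting
`x = 1`, `y = t`, comparing coefficients of powers of `t` in `k[t]`, and cancelling the binomial
coefficients `1, 6, 15, 20, 15, 6, 1`, which are nonzero in characteristic zero. -/

open MvPolynomial

/-- The binary sextic `a x^6 + 6b x^5 y + 15c x^4 y^2 + 20d x^3 y^3 + 15e x^2 y^4 +
6f x y^5 + g y^6` with coefficient vector `v = (a,b,c,d,e,f,g)`. -/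
noncomputable def sextic {A : Type*} [CommRing A] (v : Fin 7 → A) :
    MvPolynomial (Fin 2) A :=
  C (v 0) * X 0 ^ 6 + C (6 * v 1) * X 0 ^ 5 * X 1 + C (15 * v 2) * X 0 ^ 4 * X 1 ^ 2 +
    C (20 * v 3) * X 0 ^ 3 * X 1 ^ 3 + C (15 * v 4) * X 0 ^ 2 * X 1 ^ 4 +
    C (6 * v 5) * X 0 * X 1 ^ 5 + C (v 6) * X 1 ^ 6

/-- The substituted form `F(x m₁₁ + y m₂₁, x m₁₂ + y m₂₂)`. -/
noncomputable def substAct {A : Type*} [CommRing A] (M : Matrix (Fin 2) (Fin 2) A)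
    (F : MvPolynomial (Fin 2) A) : MvPolynomial (Fin 2) A :=
  aeval (fun i => C (M 0 i) * X 0 + C (M 1 i) * X 1) F

/-- `P ∈ k[a,…,g]` is SL₂-invariant: whenever `det M = 1` and `w` is the coefficient
vector of the substituted sextic, `P(w) = P(v)`. -/
def IsSL2Invariant {k : Type*} [CommRing k] (P : MvPolynomial (Fin 7) k) : Prop :=
  ∀ M : Matrix (Fin 2) (Fin 2) k, M.det = 1 →
    ∀ v w : Fin 7 → k, sextic w = substAct M (sextic v) →
      eval w P = eval v P



/-- The `j`-th binomially normalised coefficient of the sextic `u` after the substitution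
`x ↦ p x + r y`, `y ↦ q x + s y`. Umbrally, writing `u n` for `Eⁿ`, it is the expansion of
`(p + q E) ^ (6 - j) * (r + s E) ^ j`. -/
def subCoeff {A : Type*} [CommRing A] (p q r s : A) (u : ℕ → A) (j : ℕ) : A :=
  ∑ l ∈ Finset.range (7 - j), ∑ m ∈ Finset.range (j + 1),
    ((6 - j).choose l : A) * (j.choose m : A) *
      (p ^ (6 - j - l) * q ^ l * r ^ (j - m) * s ^ m * u (l + m))

/-- The transvectant is a relative invariant of weight six. -/
lemma transvectant_subCoeff {A : Type*} [CommRing A] (p q r s : A) (u : ℕ → A) :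
    subCoeff p q r s u 0 * subCoeff p q r s u 6 - 6 * subCoeff p q r s u 1 * subCoeff p q r s u 5
      + 15 * subCoeff p q r s u 2 * subCoeff p q r s u 4 - 10 * subCoeff p q r s u 3 ^ 2 =
    (p * s - q * r) ^ 6 * (u 0 * u 6 - 6 * u 1 * u 5 + 15 * u 2 * u 4 - 10 * u 3 ^ 2) := by
  simp [subCoeff, Finset.sum_range_succ, Nat.choose]
  ring

/-- Expansion of the dehomogenised substituted sextic (at `x = 1`, `y = t`). -/
lemma expand_subst {A : Type*} [CommRing A] (p q r s t : A) (u : ℕ → A) :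
    u 0 * (p + r * t) ^ 6 + 6 * u 1 * (p + r * t) ^ 5 * (q + s * t)
      + 15 * u 2 * (p + r * t) ^ 4 * (q + s * t) ^ 2
      + 20 * u 3 * (p + r * t) ^ 3 * (q + s * t) ^ 3
      + 15 * u 4 * (p + r * t) ^ 2 * (q + s * t) ^ 4
      + 6 * u 5 * (p + r * t) * (q + s * t) ^ 5 + u 6 * (q + s * t) ^ 6 =
    ∑ j ∈ Finset.range 7, (Nat.choose 6 j : A) * subCoeff p q r s u j * t ^ j := by
  simp [subCoeff, Finset.sum_range_succ, Nat.choose]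
  ring

lemma map_subCoeff {A B : Type*} [CommRing A] [CommRing B] (φ : A →+* B) (p q r s : A)
    (u : ℕ → A) (j : ℕ) :
    φ (subCoeff p q r s u j) = subCoeff (φ p) (φ q) (φ r) (φ s) (fun n => φ (u n)) j := by
  simp [subCoeff]

/-- The coefficients of a substituted sextic are given by `subCoeff`; characteristic zero is
used to cancel the binomial coefficients. -/
lemma coeff_of_sextic_eq {k : Type*} [Field k] [CharZero k] (M : Matrix (Fin 2) (Fin 2) k)
    (v w : Fin 7 → k) (h : sextic w = substAct M (sextic v)) (j : Fin 7) :
    w j = subCoeff (M 0 0) (M 0 1) (M 1 0) (M 1 1) (fun n => v (Fin.ofNat 7 n)) j := by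
  -- Dehomogenise: set `x = 1`, `y = t`, so that coefficients can be read off in `k[t]`.
  have h1 := congrArg (aeval (![1, Polynomial.X] : Fin 2 → Polynomial k)) h
  have key := expand_subst (Polynomial.C (M 0 0)) (Polynomial.C (M 0 1)) (Polynomial.C (M 1 0))
    (Polynomial.C (M 1 1)) (Polynomial.X : Polynomial k)
    (fun n => Polynomial.C (v (Fin.ofNat 7 n)))
  simp only [← map_subCoeff] at key
  have h2 : ∑ i : Fin 7, Polynomial.C ((Nat.choose 6 i : k) * w i) * Polynomial.X ^ (i : ℕ) =
      ∑ i : Fin 7, Polynomial.C ((Nat.choose 6 i : k) * subCoeff (M 0 0) (M 0 1) (M 1 0) (M 1 1)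
        (fun n => v (Fin.ofNat 7 n)) i) * Polynomial.X ^ (i : ℕ) := by
    have hr : ∀ f : ℕ → Polynomial k, ∑ i : Fin 7, f i = ∑ i ∈ Finset.range 7, f i :=
      fun f => Fin.sum_univ_eq_sum_range f 7
    rw [hr fun i => Polynomial.C ((Nat.choose 6 i : k) * subCoeff (M 0 0) (M 0 1) (M 1 0) (M 1 1)
        (fun n => v (Fin.ofNat 7 n)) i) * Polynomial.X ^ i]
    simp only [map_mul, map_natCast]
    rw [← key]
    simp [sextic, substAct] at h1
    simp [Fin.sum_univ_succ, Nat.choose, Fin.ofNat]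
    simp only [map_ofNat] at h1 ⊢
    linear_combination h1
  have h3 := congrArg (fun P => Polynomial.coeff P (j : ℕ)) h2
  simp only [Polynomial.finsetSum_coeff, Polynomial.coeff_C_mul_X_pow, Fin.val_inj,
    Finset.sum_ite_eq, Finset.mem_univ, if_true] at h3
  have hne : (Nat.choose 6 j : k) ≠ 0 :=
    Nat.cast_ne_zero.mpr (Nat.choose_pos (by omega)).ne'
  exact mul_left_cancel₀ hne h3

/-- The sixth transvectant `ag - 6bf + 15ce - 10d²` is an
SL₂-invariant of binary sextics. -/
theorem stmt2 {k : Type*} [Field k] [CharZero k] :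
    IsSL2Invariant
      ((X 0) * X 6 - 6 * X 1 * X 5 + 15 * X 2 * X 4 - 10 * X 3 ^ 2 :
        MvPolynomial (Fin 7) k) := by
  intro M hM v w h
  have hw := coeff_of_sextic_eq M v w h
  have key := transvectant_subCoeff (M 0 0) (M 0 1) (M 1 0) (M 1 1)
    (fun n => v (Fin.ofNat 7 n))
  rw [Matrix.det_fin_two] at hM
  rw [hM, one_pow, one_mul] at key
  simp only [map_sub, map_add, map_mul, map_pow, eval_X, map_ofNat]
  rw [hw 0, hw 1, hw 2, hw 3, hw 4, hw 5, hw 6]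
  exact key
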